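/- arXiv:1706.00392 — 2 statements merged into one kernel-verified Lean document; each statement's English description precedes it below -/
import Mathlib

section
/- For all positive integers ℓ and m, the number of primes p ≤ x with p > ℓ such that 2^m divides φ(p−ℓ) and 2^m divides φ(p+ℓ) is asymptotic to π(x) as x → ∞; that is, this count divided by π(x) tends to 1. -/
open Filter Topology

noncomputable def sf (l n : ℕ) : ℝ := ∑ d ∈ l.divisors, if d ∣ n then (ArithmeticFunction.moebius d : ℝ) * d else 0

lemma sf_coprime {l n : ℕ} (hl : l ≠ 0) (h : n.Coprime l) : sf l n = 1 := by
  unfold sf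
  rw [Finset.sum_eq_single 1]
  · simp
  · intro d hd h1
    rw [if_neg]
    intro hdn
    exact h1 (Nat.eq_one_of_dvd_coprimes h hdn (Nat.dvd_of_mem_divisors hd))
  · simp [hl]

lemma mu_sum (l e : ℕ) (hl : Squarefree l) (he : e ∣ l) :
    ∑ d ∈ l.divisors, (if e ∣ d then (ArithmeticFunction.moebius d : ℝ) else 0)
      = if e = l then (ArithmeticFunction.moebius l : ℝ) else 0 := by
  have hl0 := hl.ne_zero
  obtain ⟨k, rfl⟩ := he
  have he0 : e ≠ 0 := by rintro rfl; simp at hl0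
  have hk0 : k ≠ 0 := by rintro rfl; simp at hl0
  have hco : e.Coprime k := Nat.coprime_of_squarefree_mul hl
  rw [← Finset.sum_filter]
  have : (e * k).divisors.filter (e ∣ ·) = k.divisors.image (e * ·) := by
    ext d
    simp only [Finset.mem_filter, Nat.mem_divisors, Finset.mem_image]
    constructor
    · rintro ⟨⟨h1, _⟩, ⟨j, rfl⟩⟩
      exact ⟨j, ⟨Nat.dvd_of_mul_dvd_mul_left (Nat.pos_of_ne_zero he0) h1, hk0⟩, rfl⟩
    · rintro ⟨j, ⟨h1, _⟩, rfl⟩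
      exact ⟨⟨Nat.mul_dvd_mul_left e h1, hl0⟩, Dvd.intro j rfl⟩
  rw [this, Finset.sum_image (by intro a _ b _ h; exact Nat.eq_of_mul_eq_mul_left (Nat.pos_of_ne_zero he0) h)]
  have h2 : ∀ j ∈ k.divisors, (ArithmeticFunction.moebius (e * j) : ℝ)
      = ArithmeticFunction.moebius e * ArithmeticFunction.moebius j := by
    intro j hj
    rw [ArithmeticFunction.isMultiplicative_moebius.map_mul_of_coprime
      (hco.coprime_dvd_right (Nat.dvd_of_mem_divisors hj))]
    push_cast; rfl
  rw [Finset.sum_congr rfl h2, ← Finset.mul_sum]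
  have h3 : (∑ j ∈ k.divisors, (ArithmeticFunction.moebius j : ℝ)) = if k = 1 then 1 else 0 := by
    have h := congrArg (fun f : ArithmeticFunction ℤ => f k) ArithmeticFunction.coe_zeta_mul_moebius
    simp only [ArithmeticFunction.coe_zeta_mul_apply, ArithmeticFunction.one_apply] at h
    exact_mod_cast h
  rw [h3]
  by_cases hk : k = 1
  · subst hk; simp
  · have : e ≠ e * k := by
      intro h; apply hk
      exact Nat.eq_of_mul_eq_mul_left (Nat.pos_of_ne_zero he0) (by omega)
    simp [hk, this]

lemma gcd_sum (l l' : ℕ) (hl : Squarefree l) (hl' : Squarefree l') :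
    ∑ d ∈ l.divisors, ∑ d' ∈ l'.divisors, (ArithmeticFunction.moebius d : ℝ) *
      ArithmeticFunction.moebius d' * (Nat.gcd d d' : ℝ) = if l = l' then (Nat.totient l : ℝ) else 0 := by
  have h1 : ∀ d ∈ l.divisors, ∀ d' ∈ l'.divisors, (ArithmeticFunction.moebius d : ℝ) *
      ArithmeticFunction.moebius d' * (Nat.gcd d d' : ℝ) = ∑ e ∈ l.divisors, (Nat.totient e : ℝ) *
        ((if e ∣ d then (ArithmeticFunction.moebius d : ℝ) else 0) *
         (if e ∣ d' then (ArithmeticFunction.moebius d' : ℝ) else 0)) := by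
    intro d hd d' hd'
    have hd1 := Nat.dvd_of_mem_divisors hd
    have : (Nat.gcd d d' : ℝ) = ∑ e ∈ l.divisors, if e ∣ d ∧ e ∣ d' then (Nat.totient e : ℝ) else 0 := by
      rw [← Finset.sum_filter]
      have h : l.divisors.filter (fun e => e ∣ d ∧ e ∣ d') = (Nat.gcd d d').divisors := by
        ext e
        simp only [Finset.mem_filter, Nat.mem_divisors, Nat.dvd_gcd_iff]
        constructor
        · rintro ⟨_, h⟩
          exact ⟨h, (Nat.gcd_pos_of_pos_left _ (Nat.pos_of_mem_divisors hd)).ne'⟩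
        · rintro ⟨h, _⟩
          exact ⟨⟨h.1.trans hd1, hl.ne_zero⟩, h⟩
      rw [h]
      exact_mod_cast (Nat.sum_totient _).symm
    rw [this, Finset.mul_sum]
    refine Finset.sum_congr rfl fun e _ => ?_
    by_cases h1 : e ∣ d <;> by_cases h2 : e ∣ d' <;> simp [h1, h2]; ring
  rw [Finset.sum_congr rfl fun d hd => Finset.sum_congr rfl fun d' hd' => h1 d hd d' hd']
  have h2 : ∑ d ∈ l.divisors, ∑ d' ∈ l'.divisors, ∑ e ∈ l.divisors, (Nat.totient e : ℝ) *
        ((if e ∣ d then (ArithmeticFunction.moebius d : ℝ) else 0) *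
         (if e ∣ d' then (ArithmeticFunction.moebius d' : ℝ) else 0)) =
      ∑ e ∈ l.divisors, (Nat.totient e : ℝ) *
        ((∑ d ∈ l.divisors, (if e ∣ d then (ArithmeticFunction.moebius d : ℝ) else 0)) *
         (∑ d' ∈ l'.divisors, (if e ∣ d' then (ArithmeticFunction.moebius d' : ℝ) else 0))) := by
    simp_rw [Finset.sum_mul_sum, Finset.mul_sum]
    rw [Finset.sum_congr rfl fun _ _ => Finset.sum_comm, Finset.sum_comm]
  rw [h2]
  rw [Finset.sum_eq_single l]
  · rw [mu_sum l l hl dvd_rfl]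
    by_cases h : l = l'
    · subst h
      rw [mu_sum l l hl dvd_rfl]
      have : (ArithmeticFunction.moebius l : ℝ) * ArithmeticFunction.moebius l = 1 := by
        have := ArithmeticFunction.moebius_sq_eq_one_of_squarefree hl
        rw [sq] at this
        exact_mod_cast this
      simp [this]
    · by_cases hd : l ∣ l'
      · rw [mu_sum l' l hl' hd]; simp [h]
      · rw [Finset.sum_eq_zero (s := l'.divisors)]
        · simp [h]
        · intro d hd'
          rw [if_neg]
          intro hh; exact hd (hh.trans (Nat.dvd_of_mem_divisors hd'))
  · intro e he hne
    rw [mu_sum l e hl (Nat.dvd_of_mem_divisors he)]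
    simp [hne]
  · simp [hl.ne_zero]

lemma sum_div_le (l z : ℕ) (h : l ≤ z) : ∑ d ∈ l.divisors, (d : ℝ) ≤ (z : ℝ) ^ 2 := by
  have h1 : ∑ d ∈ l.divisors, (d : ℝ) ≤ ∑ d ∈ l.divisors, (z : ℝ) := by
    refine Finset.sum_le_sum fun d hd => ?_
    exact_mod_cast (Nat.divisor_le hd).trans h
  have h2 : (l.divisors.card : ℝ) ≤ z := by
    exact_mod_cast (Nat.card_divisors_le_self l).trans h
  refine h1.trans ?_
  rw [Finset.sum_const, nsmul_eq_mul, sq]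
  gcongr

lemma sieve_corr (A : Finset ℕ) (X : ℝ) (z l l' : ℕ) (hl : Squarefree l) (hl' : Squarefree l')
    (hz : l ≤ z) (hz' : l' ≤ z)
    (hA : ∀ d, d ∣ l → ∀ d', d' ∣ l' →
      |((A.filter (fun n => Nat.lcm d d' ∣ n)).card : ℝ) - X / (Nat.lcm d d' : ℝ)| ≤ 1) :
    ∑ n ∈ A, sf l n * sf l' n ≤ X * (if l = l' then (Nat.totient l : ℝ) else 0) + (z : ℝ) ^ 4 := by
  have e1 : ∑ n ∈ A, sf l n * sf l' n = ∑ d ∈ l.divisors, ∑ d' ∈ l'.divisors,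
      ((ArithmeticFunction.moebius d : ℝ) * d) * ((ArithmeticFunction.moebius d' : ℝ) * d') *
        ((A.filter (fun n => Nat.lcm d d' ∣ n)).card : ℝ) := by
    unfold sf
    simp_rw [Finset.sum_mul_sum]
    rw [Finset.sum_comm, Finset.sum_congr rfl fun _ _ => Finset.sum_comm]
    refine Finset.sum_congr rfl fun d _ => Finset.sum_congr rfl fun d' _ => ?_
    rw [Finset.card_filter, Nat.cast_sum, Finset.mul_sum]
    refine Finset.sum_congr rfl fun n _ => ?_
    by_cases h1 : d ∣ n <;> by_cases h2 : d' ∣ n <;> simp [h1, h2, Nat.lcm_dvd_iff]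
  rw [← gcd_sum l l' hl hl', e1, Finset.mul_sum]
  have e2 : (z : ℝ) ^ 4 ≥ ∑ d ∈ l.divisors, ∑ d' ∈ l'.divisors, (d : ℝ) * d' := by
    rw [← Finset.sum_mul_sum]
    have := mul_le_mul (sum_div_le l z hz) (sum_div_le l' z hz')
      (Finset.sum_nonneg fun _ _ => Nat.cast_nonneg _) (by positivity)
    calc _ ≤ _ := this
      _ = _ := by ring
  refine le_trans ?_ (add_le_add_right e2 _)
  rw [← Finset.sum_add_distrib]
  refine Finset.sum_le_sum fun d hd => ?_
  rw [Finset.mul_sum, ← Finset.sum_add_distrib]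
  refine Finset.sum_le_sum fun d' hd' => ?_
  have hh := hA d (Nat.dvd_of_mem_divisors hd) d' (Nat.dvd_of_mem_divisors hd')
  have hd0 : (0:ℝ) < d := by exact_mod_cast Nat.pos_of_mem_divisors hd
  have hd0' : (0:ℝ) < d' := by exact_mod_cast Nat.pos_of_mem_divisors hd'
  have hlcm : (0:ℝ) < (Nat.lcm d d' : ℝ) := by
    exact_mod_cast Nat.lcm_pos (Nat.pos_of_mem_divisors hd) (Nat.pos_of_mem_divisors hd')
  have hg : (Nat.gcd d d' : ℝ) * (Nat.lcm d d' : ℝ) = d * d' := by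
    exact_mod_cast Nat.gcd_mul_lcm d d'
  have hm : |(ArithmeticFunction.moebius d : ℝ)| ≤ 1 := by
    exact_mod_cast ArithmeticFunction.abs_moebius_le_one (n := d)
  have hm' : |(ArithmeticFunction.moebius d' : ℝ)| ≤ 1 := by
    exact_mod_cast ArithmeticFunction.abs_moebius_le_one (n := d')
  set c := ((A.filter (fun n => Nat.lcm d d' ∣ n)).card : ℝ)
  set u := (ArithmeticFunction.moebius d : ℝ)
  set v := (ArithmeticFunction.moebius d' : ℝ)
  have e3 : X * (u * v * (Nat.gcd d d' : ℝ)) = (u * d) * (v * d') * (X / (Nat.lcm d d' : ℝ)) := by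
    field_simp
    linear_combination X * u * v * hg
  have e4 : (u * d) * (v * d') * (c - X / (Nat.lcm d d' : ℝ)) ≤ d * d' := by
    refine (le_abs_self _).trans ?_
    rw [abs_mul, abs_mul, abs_mul, abs_mul, abs_of_pos hd0, abs_of_pos hd0']
    have : |u| * d * (|v| * d') * |c - X / (Nat.lcm d d' : ℝ)| ≤ 1 * d * (1 * d') * 1 := by
      gcongr
    linarith
  linarith

lemma sieve (A : Finset ℕ) (X : ℝ) (z : ℕ) (L : Finset ℕ) (hL : ∀ l ∈ L, Squarefree l ∧ l ≤ z)
    (h0 : L.Nonempty)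
    (hA : ∀ l ∈ L, ∀ l' ∈ L, ∀ d, d ∣ l → ∀ d', d' ∣ l' →
      |((A.filter (fun n => Nat.lcm d d' ∣ n)).card : ℝ) - X / (Nat.lcm d d' : ℝ)| ≤ 1) :
    ((A.filter (fun n => ∀ l ∈ L, n.Coprime l)).card : ℝ) ≤
      X / (∑ l ∈ L, 1 / (Nat.totient l : ℝ)) + (z : ℝ) ^ 4 := by
  set S := ∑ l ∈ L, 1 / (Nat.totient l : ℝ) with hS
  have hφ : ∀ l ∈ L, (0:ℝ) < Nat.totient l := fun l hl => by
    exact_mod_cast Nat.totient_pos.2 (Nat.pos_of_ne_zero (hL l hl).1.ne_zero)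
  have hSpos : 0 < S := Finset.sum_pos (fun l hl => by have := hφ l hl; positivity) h0
  have key : S ^ 2 * ((A.filter (fun n => ∀ l ∈ L, n.Coprime l)).card : ℝ)
      ≤ ∑ n ∈ A, (∑ l ∈ L, 1 / (Nat.totient l : ℝ) * sf l n) ^ 2 := by
    rw [Finset.card_filter, Nat.cast_sum, Finset.mul_sum]
    refine Finset.sum_le_sum fun n _ => ?_
    by_cases h : ∀ l ∈ L, n.Coprime l
    · rw [if_pos h, Nat.cast_one, mul_one, hS]
      apply le_of_eq
      congr 1
      refine Finset.sum_congr rfl fun l hl => ?_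
      rw [sf_coprime (hL l hl).1.ne_zero (h l hl), mul_one]
    · rw [if_neg h]; simp; positivity
  have e1 : ∑ n ∈ A, (∑ l ∈ L, 1 / (Nat.totient l : ℝ) * sf l n) ^ 2 =
      ∑ l ∈ L, ∑ l' ∈ L, 1 / (Nat.totient l : ℝ) * (1 / (Nat.totient l' : ℝ)) *
        ∑ n ∈ A, sf l n * sf l' n := by
    simp_rw [sq, Finset.sum_mul_sum, Finset.mul_sum]
    rw [Finset.sum_comm, Finset.sum_congr rfl fun _ _ => Finset.sum_comm]
    refine Finset.sum_congr rfl fun d _ => Finset.sum_congr rfl fun d' _ =>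
      Finset.sum_congr rfl fun n _ => by ring
  have e2 : ∑ l ∈ L, ∑ l' ∈ L, 1 / (Nat.totient l : ℝ) * (1 / (Nat.totient l' : ℝ)) *
        ∑ n ∈ A, sf l n * sf l' n ≤ ∑ l ∈ L, ∑ l' ∈ L,
        ((if l = l' then X * (1 / (Nat.totient l : ℝ)) else 0) +
         1 / (Nat.totient l : ℝ) * (1 / (Nat.totient l' : ℝ)) * (z : ℝ) ^ 4) := by
    refine Finset.sum_le_sum fun l hl => Finset.sum_le_sum fun l' hl' => ?_
    have h1 := hφ l hl
    have h2 := hφ l' hl'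
    have := sieve_corr A X z l l' (hL l hl).1 (hL l' hl').1 (hL l hl).2 (hL l' hl').2 (hA l hl l' hl')
    calc _ ≤ 1 / (Nat.totient l : ℝ) * (1 / (Nat.totient l' : ℝ)) *
          (X * (if l = l' then (Nat.totient l : ℝ) else 0) + (z : ℝ) ^ 4) := by gcongr
      _ = _ := by
        by_cases h : l = l'
        · subst h; simp only [if_true]; field_simp
        · simp [h]
  have e3 : ∑ l ∈ L, ∑ l' ∈ L,
        ((if l = l' then X * (1 / (Nat.totient l : ℝ)) else 0) +
         1 / (Nat.totient l : ℝ) * (1 / (Nat.totient l' : ℝ)) * (z : ℝ) ^ 4)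
        = X * S + S ^ 2 * (z : ℝ) ^ 4 := by
    simp_rw [Finset.sum_add_distrib]
    congr 1
    · rw [hS, Finset.mul_sum]
      refine Finset.sum_congr rfl fun l hl => ?_
      rw [Finset.sum_ite_eq]; simp [hl]
    · rw [sq, hS, Finset.sum_mul_sum]
      simp_rw [← Finset.sum_mul]
  have e4 : S ^ 2 * ((A.filter (fun n => ∀ l ∈ L, n.Coprime l)).card : ℝ)
      ≤ X * S + S ^ 2 * (z : ℝ) ^ 4 := by linarith
  have e5 : X / S + (z : ℝ) ^ 4 = (X * S + S ^ 2 * (z : ℝ) ^ 4) / S ^ 2 := by field_simp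
  rw [e5, le_div_iff₀ (by positivity)]
  linarith

lemma sum_inv_sq (z : ℕ) : ∑ k ∈ Finset.Icc 1 z, 1 / ((k : ℝ) ^ 2) ≤ 2 := by
  rcases Nat.eq_zero_or_pos z with rfl | hz
  · simp
  have h := sum_Ioc_inv_sq_le_sub (α := ℝ) (k := 1) (n := z) one_ne_zero hz
  have : Finset.Icc 1 z = insert 1 (Finset.Ioc 1 z) := by
    ext k; simp; omega
  rw [this, Finset.sum_insert (by simp)]
  simp only [one_div] at *
  have h3 : (0:ℝ) ≤ (z:ℝ)⁻¹ := by positivity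
  have h4 : (((1:ℕ):ℝ) ^ 2)⁻¹ = 1 := by norm_num
  have h5 : (((1:ℕ):ℝ))⁻¹ = 1 := by norm_num
  rw [h4]
  rw [h5] at h
  linarith

lemma sqf_sum (Q z : ℕ) : ∑ n ∈ (Finset.Icc 1 z).filter (fun n => Q.Coprime n), 1 / (n : ℝ) ≤
    2 * ∑ l ∈ (Finset.Icc 1 z).filter (fun l => Squarefree l ∧ Q.Coprime l), 1 / (Nat.totient l : ℝ) := by
  set L := (Finset.Icc 1 z).filter (fun l => Squarefree l ∧ Q.Coprime l)
  have h1 : ∑ n ∈ (Finset.Icc 1 z).filter (fun n => Q.Coprime n), 1 / (n : ℝ) ≤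
      ∑ n ∈ (Finset.Icc 1 z ×ˢ L).image (fun t : ℕ × ℕ => (t.1 ^ 2 * t.2 : ℕ)), 1 / ((n : ℕ) : ℝ) := by
    refine Finset.sum_le_sum_of_subset_of_nonneg ?_ (fun _ _ _ => by positivity)
    intro n hn
    simp only [Finset.mem_filter, Finset.mem_Icc] at hn
    obtain ⟨a, b, hab, hs⟩ := Nat.sq_mul_squarefree n
    have hb : 0 < b := by
      rcases Nat.eq_zero_or_pos b with rfl | h
      · simp at hab; omega
      · exact h
    have ha : 0 < a := Nat.pos_of_ne_zero hs.ne_zero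
    have han : a ≤ n := by rw [← hab]; exact Nat.le_mul_of_pos_left _ (by positivity)
    have hbn : b ≤ n := by rw [← hab, sq]; nlinarith [Nat.mul_pos hb ha]
    simp only [Finset.mem_image, Finset.mem_product, Finset.mem_Icc, L, Finset.mem_filter, Prod.exists]
    refine ⟨b, a, ⟨⟨hb, by omega⟩, ⟨ha, by omega⟩, hs, ?_⟩, hab⟩
    exact hn.2.coprime_dvd_right (hab ▸ Dvd.intro_left _ rfl)
  have h2 : ∑ n ∈ (Finset.Icc 1 z ×ˢ L).image (fun t : ℕ × ℕ => (t.1 ^ 2 * t.2 : ℕ)), 1 / ((n : ℕ) : ℝ) ≤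
      ∑ t ∈ Finset.Icc 1 z ×ˢ L, 1 / ((t.1 ^ 2 * t.2 : ℕ) : ℝ) :=
    Finset.sum_image_le_of_nonneg (fun _ _ => by positivity)
  have h3 : ∑ t ∈ Finset.Icc 1 z ×ˢ L, 1 / ((t.1 ^ 2 * t.2 : ℕ) : ℝ) =
      (∑ k ∈ Finset.Icc 1 z, 1 / ((k : ℝ) ^ 2)) * ∑ l ∈ L, 1 / (l : ℝ) := by
    rw [Finset.sum_mul_sum, Finset.sum_product]
    refine Finset.sum_congr rfl fun _ _ => Finset.sum_congr rfl fun _ _ => ?_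
    push_cast; rw [one_div_mul_one_div]
  have h4 : ∑ l ∈ L, 1 / (l : ℝ) ≤ ∑ l ∈ L, 1 / (Nat.totient l : ℝ) := by
    refine Finset.sum_le_sum fun l hl => ?_
    simp only [L, Finset.mem_filter, Finset.mem_Icc] at hl
    have : (0:ℝ) < Nat.totient l := by exact_mod_cast Nat.totient_pos.2 (by omega)
    apply one_div_le_one_div_of_le this
    exact_mod_cast Nat.totient_le l
  calc _ ≤ _ := h1.trans (h2.trans h3.le)
    _ ≤ _ := by
      gcongr
      exact sum_inv_sq z

lemma cop_sum (Q K : ℕ) (hQ : 0 < Q) : (Nat.totient Q : ℝ) / Q * Real.log K ≤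
    ∑ n ∈ (Finset.Icc 1 (K * Q)).filter (fun n => Q.Coprime n), 1 / (n : ℝ) := by
  have h1 : (Nat.totient Q : ℝ) / Q * ∑ j ∈ Finset.range K, 1 / ((j : ℝ) + 1) ≤
    ∑ n ∈ (Finset.Icc 1 (K * Q)).filter (fun n => Q.Coprime n), 1 / (n : ℝ) := by
    induction K with
    | zero => simp
    | succ K ih =>
      have hd : (Finset.Icc 1 ((K + 1) * Q)).filter (fun n => Q.Coprime n) =
          (Finset.Icc 1 (K * Q)).filter (fun n => Q.Coprime n) ∪
          (Finset.Ico (K * Q + 1) (K * Q + 1 + Q)).filter (fun n => Q.Coprime n) := by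
        rw [← Finset.filter_union]
        congr 1
        ext n
        have : (K + 1) * Q = K * Q + Q := by ring
        simp only [Finset.mem_union, Finset.mem_Icc, Finset.mem_Ico, this]
        have := Nat.zero_le (K * Q)
        omega
      rw [Finset.sum_range_succ, mul_add, hd, Finset.sum_union]
      · refine add_le_add ih ?_
        have hc := Nat.filter_coprime_Ico_eq_totient Q (K * Q + 1)
        calc (Nat.totient Q : ℝ) / Q * (1 / ((K : ℝ) + 1))
            = ∑ n ∈ (Finset.Ico (K * Q + 1) (K * Q + 1 + Q)).filter (fun n => Q.Coprime n),
              1 / (((K : ℝ) + 1) * Q) := by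
              rw [Finset.sum_const, hc, nsmul_eq_mul]
              field_simp
          _ ≤ _ := by
            refine Finset.sum_le_sum fun n hn => ?_
            simp only [Finset.mem_filter, Finset.mem_Ico] at hn
            have h1 : (0:ℝ) < n := by
              have : 0 < n := by omega
              exact_mod_cast this
            apply one_div_le_one_div_of_le h1
            have : n ≤ (K + 1) * Q := by nlinarith [hn.1.2]
            exact_mod_cast this
      · rw [Finset.disjoint_left]
        intro n h1 h2
        simp only [Finset.mem_filter, Finset.mem_Icc, Finset.mem_Ico] at h1 h2
        omega
  refine le_trans ?_ h1
  gcongr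
  have h := log_add_one_le_harmonic K
  have e : ((harmonic K : ℚ) : ℝ) = ∑ j ∈ Finset.range K, 1 / ((j : ℝ) + 1) := by
    simp [harmonic]
  rw [e] at h
  refine le_trans ?_ h
  rcases Nat.eq_zero_or_pos K with rfl | hK
  · simp
  · apply Real.log_le_log (by exact_mod_cast hK)
    push_cast; linarith

lemma ap_count (Q D a x : ℕ) (hQ : 0 < Q) (hD : 0 < D) (hco : Q.Coprime D) :
    |((((Finset.Ioc 0 x).filter (fun n => n ≡ a [MOD Q])).filter (fun n => D ∣ n)).card : ℝ)
      - ((x : ℝ) / Q) / D| ≤ 1 := by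
  obtain ⟨v, hv1, hv2⟩ := Nat.chineseRemainder hco a 0
  have h1 : ((Finset.Ioc 0 x).filter (fun n => n ≡ a [MOD Q])).filter (fun n => D ∣ n) =
      (Finset.Ioc 0 x).filter (fun n => n ≡ v [MOD (Q * D)]) := by
    rw [Finset.filter_filter]
    refine Finset.filter_congr fun n _ => ?_
    rw [← Nat.modEq_and_modEq_iff_modEq_mul hco, ← Nat.modEq_zero_iff_dvd]
    constructor
    · rintro ⟨h1, h2⟩; exact ⟨h1.trans hv1.symm, h2.trans hv2.symm⟩
    · rintro ⟨h1, h2⟩; exact ⟨h1.trans hv1, h2.trans hv2⟩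
  have h2 := Nat.Ioc_filter_modEq_card 0 x (Nat.mul_pos hQ hD) v
  rw [h1]
  set c := ((Finset.Ioc 0 x).filter (fun n => n ≡ v [MOD (Q * D)])).card
  have hr : (0:ℚ) < ((Q * D : ℕ) : ℚ) := by exact_mod_cast Nat.mul_pos hQ hD
  set r := ((Q * D : ℕ) : ℚ) with hrdef
  have hx : ((x:ℚ) - v) / r = x / r + ((0:ℕ) - (v:ℚ)) / r := by push_cast; ring
  have hx0 : (0:ℚ) ≤ x / r := by positivity
  have f1 := Int.floor_le (((x:ℚ) - v) / r)
  have f2 := Int.lt_floor_add_one (((x:ℚ) - v) / r)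
  have f3 := Int.floor_le ((((0:ℕ):ℚ) - v) / r)
  have f4 := Int.lt_floor_add_one ((((0:ℕ):ℚ) - v) / r)
  have hmono : ⌊(((0:ℕ):ℚ) - v) / r⌋ ≤ ⌊((x:ℚ) - v) / r⌋ := by
    apply Int.floor_le_floor; rw [hx]; linarith
  rw [max_eq_left (by linarith)] at h2
  have h3 : (c : ℚ) = (⌊((x:ℚ) - v) / r⌋ : ℚ) - ⌊(((0:ℕ):ℚ) - v) / r⌋ := by exact_mod_cast h2
  have h4 : |(c : ℚ) - x / r| ≤ 1 := by
    rw [abs_le]; constructor <;> linarith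
  have h5 : ((x : ℝ) / Q) / D = ((x / r : ℚ) : ℝ) := by
    rw [hrdef]; push_cast; rw [div_div]
  rw [h5]
  exact_mod_cast h4

lemma bt_fin (Q K a x : ℕ) (hQ : 0 < Q) (hK : 1 < K) :
    (((Finset.Ioc 0 x).filter (fun p : ℕ => p.Prime ∧ p ≡ a [MOD Q])).card : ℝ) ≤
      2 * x / (Nat.totient Q * Real.log K) + 2 * ((K : ℝ) * Q) ^ 4 := by
  set z := K * Q with hz
  have hz1 : 1 ≤ z := Nat.mul_pos (by omega) hQ
  set L := (Finset.Icc 1 z).filter (fun l => Squarefree l ∧ Q.Coprime l) with hL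
  set A := (Finset.Ioc 0 x).filter (fun n => n ≡ a [MOD Q]) with hA
  have hφ : (0:ℝ) < Nat.totient Q := by exact_mod_cast Nat.totient_pos.2 hQ
  have hQr : (0:ℝ) < Q := by exact_mod_cast hQ
  have hlog : 0 < Real.log K := Real.log_pos (by exact_mod_cast hK)
  have hs := sieve A ((x:ℝ) / Q) z L (by
      intro l hl; simp only [hL, Finset.mem_filter, Finset.mem_Icc] at hl
      exact ⟨hl.2.1, hl.1.2⟩) ⟨1, by simp [hL, hz1]⟩ (by
      intro l hl l' hl' d hd d' hd'
      simp only [hL, Finset.mem_filter, Finset.mem_Icc] at hl hl'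
      apply ap_count Q (Nat.lcm d d') a x hQ
      · exact Nat.lcm_pos (Nat.pos_of_dvd_of_pos hd (by omega)) (Nat.pos_of_dvd_of_pos hd' (by omega))
      · apply Nat.Coprime.coprime_dvd_right (Nat.lcm_dvd_mul d d')
        exact (hl.2.2.coprime_dvd_right hd).mul_right (hl'.2.2.coprime_dvd_right hd'))
  have hsub : (Finset.Ioc 0 x).filter (fun p : ℕ => p.Prime ∧ p ≡ a [MOD Q]) ⊆
      Finset.Ioc 0 z ∪ A.filter (fun n => ∀ l ∈ L, n.Coprime l) := by
    intro p hp
    simp only [Finset.mem_filter, Finset.mem_Ioc] at hp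
    simp only [Finset.mem_union, Finset.mem_filter, Finset.mem_Ioc, hA]
    by_cases h : p ≤ z
    · left; exact ⟨hp.1.1, h⟩
    · right
      refine ⟨⟨hp.1, hp.2.2⟩, fun l hl => ?_⟩
      simp only [hL, Finset.mem_filter, Finset.mem_Icc] at hl
      rw [Nat.Prime.coprime_iff_not_dvd hp.2.1]
      intro hd
      have := Nat.le_of_dvd (by omega) hd
      omega
  have hcard : (((Finset.Ioc 0 x).filter (fun p : ℕ => p.Prime ∧ p ≡ a [MOD Q])).card : ℝ) ≤
      z + ((A.filter (fun n => ∀ l ∈ L, n.Coprime l)).card : ℝ) := by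
    have := (Finset.card_le_card hsub).trans (Finset.card_union_le _ _)
    simp only [Nat.card_Ioc, Nat.sub_zero] at this
    exact_mod_cast this
  have hS := (cop_sum Q K hQ).trans (sqf_sum Q z)
  set S := ∑ l ∈ L, 1 / (Nat.totient l : ℝ)
  have hS2 : (Nat.totient Q : ℝ) / Q * Real.log K / 2 ≤ S := by linarith
  have hpos : 0 < (Nat.totient Q : ℝ) / Q * Real.log K / 2 := by positivity
  have h1 : (x:ℝ) / Q / S ≤ (x:ℝ) / Q / ((Nat.totient Q : ℝ) / Q * Real.log K / 2) := by
    gcongr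
  have h2 : (x:ℝ) / Q / ((Nat.totient Q : ℝ) / Q * Real.log K / 2) =
      2 * x / (Nat.totient Q * Real.log K) := by
    field_simp
  have hzr : (z : ℝ) = K * Q := by rw [hz]; push_cast; rfl
  have hz1r : (1:ℝ) ≤ z := by exact_mod_cast hz1
  have h3 : (z:ℝ) ≤ z ^ 4 := le_self_pow₀ hz1r (by norm_num)
  rw [← hzr]
  linarith

lemma pi_lower : ∀ᶠ x : ℕ in atTop, (x : ℝ) / Real.log x ≤ 2 * (Nat.primeCounting x : ℝ) := by
  have h1 : ∀ᶠ y : ℝ in atTop, ‖Real.log y‖ ≤ 0.09 * ‖(id y : ℝ)‖ :=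
    Real.isLittleO_log_id_atTop.def (by norm_num)
  have h2 := ((tendsto_atTop_add_const_right atTop (1:ℝ) tendsto_natCast_atTop_atTop)).eventually h1
  filter_upwards [h2, eventually_ge_atTop 2] with x hx hx2
  have hx2r : (2:ℝ) ≤ x := by exact_mod_cast hx2
  have h3 := Chebyshev.pi_ge x
  have hlog : 0 < Real.log x := Real.log_pos (by linarith)
  have h4 : Real.log ((x:ℝ) + 1) ≤ 0.09 * (x + 1) := by
    refine (le_abs_self _).trans ?_
    simp only [Real.norm_eq_abs, id] at hx
    rwa [abs_of_pos (show (0:ℝ) < x + 1 by linarith)] at hx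
  have h5 : (x:ℝ) / 2 / Real.log x ≤ (x * Real.log 2 - Real.log (x + 1)) / Real.log x := by
    gcongr
    have := Real.log_two_gt_d9
    nlinarith
  have h6 : (x:ℝ) / Real.log x = 2 * (x / 2 / Real.log x) := by ring
  rw [h6]
  linarith

lemma bt (Q : ℕ) (hQ : 0 < Q) : ∀ᶠ x : ℕ in atTop, ∀ a : ℕ,
    (((Finset.Ioc 0 x).filter (fun p : ℕ => p.Prime ∧ p ≡ a [MOD Q])).card : ℝ) ≤
      66 * (Nat.primeCounting x : ℝ) / Nat.totient Q := by
  have hφ : (0:ℝ) < Nat.totient Q := by exact_mod_cast Nat.totient_pos.2 hQ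
  have hQr : (0:ℝ) < Q := by exact_mod_cast hQ
  have hc : (0:ℝ) < 1 / (2 * Q ^ 4 * Nat.totient Q) := by positivity
  have h1 : ∀ᶠ y : ℝ in atTop, ‖Real.log y‖ ≤ 1 / (2 * Q ^ 4 * Nat.totient Q) * ‖y ^ (1/2 : ℝ)‖ :=
    (isLittleO_log_rpow_atTop (by norm_num)).def hc
  have h2 : ∀ᶠ y : ℝ in atTop, (4:ℝ) ≤ y ^ (1/8 : ℝ) :=
    (tendsto_rpow_atTop (by norm_num)).eventually_ge_atTop 4
  filter_upwards [tendsto_natCast_atTop_atTop.eventually h1, tendsto_natCast_atTop_atTop.eventually h2,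
    pi_lower, eventually_ge_atTop 2] with x hx1 hx2 hx3 hx4 a
  have hxr : (2:ℝ) ≤ x := by exact_mod_cast hx4
  have hx0 : (0:ℝ) < x := by linarith
  set y := (x:ℝ) ^ (1/8 : ℝ) with hy
  set K := ⌊y⌋₊ with hK
  have hlogx : 0 < Real.log x := Real.log_pos (by linarith)
  have hKy : (K:ℝ) ≤ y := Nat.floor_le (by linarith)
  have hKy' : y - 1 < K := by have := Nat.lt_floor_add_one y; linarith
  have hK1 : 1 < K := by
    have : (1:ℝ) < K := by linarith
    exact_mod_cast this
  have hlogy : Real.log y = Real.log x / 8 := by rw [hy, Real.log_rpow hx0]; ring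
  have hlogK : Real.log x / 16 ≤ Real.log K := by
    have hs : Real.sqrt y ≤ K := by
      have h2s : 2 ≤ Real.sqrt y := by
        apply Real.le_sqrt_of_sq_le; linarith
      have := Real.mul_self_sqrt (show 0 ≤ y by linarith)
      nlinarith
    have := Real.log_le_log (Real.sqrt_pos.2 (by linarith)) hs
    rw [Real.log_sqrt (by linarith), hlogy] at this
    linarith
  have hy4 : y ^ 4 = (x:ℝ) ^ (1/2 : ℝ) := by
    rw [hy, ← Real.rpow_natCast, ← Real.rpow_mul hx0.le]; norm_num
  set w := (x:ℝ) ^ (1/2 : ℝ) with hw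
  have hw0 : 0 < w := by positivity
  have hww : w * w = x := by
    rw [hw, ← Real.rpow_add hx0]; norm_num
  have hlw : Real.log x ≤ 1 / (2 * Q ^ 4 * Nat.totient Q) * w := by
    simp only [Real.norm_eq_abs] at hx1
    rwa [abs_of_pos hlogx, abs_of_pos hw0] at hx1
  have hb := bt_fin Q K a x hQ hK1
  have e1 : 2 * (x:ℝ) / (Nat.totient Q * Real.log K) ≤ 2 * x / (Nat.totient Q * (Real.log x / 16)) := by
    gcongr
  have e2 : 2 * (x:ℝ) / (Nat.totient Q * (Real.log x / 16)) = 32 * (x / Real.log x) / Nat.totient Q := by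
    field_simp; ring
  have e3 : 2 * ((K:ℝ) * Q) ^ 4 ≤ (x / Real.log x) / Nat.totient Q := by
    have : ((K:ℝ) * Q) ^ 4 ≤ w * Q ^ 4 := by
      rw [mul_pow, ← hy4]; gcongr
    refine le_trans (b := 2 * (w * Q ^ 4)) (by linarith) ?_
    rw [div_div, le_div_iff₀ (by positivity)]
    have h : 2 * (w * Q ^ 4) * (Real.log x * Nat.totient Q) ≤
        2 * (w * Q ^ 4) * ((1 / (2 * Q ^ 4 * Nat.totient Q) * w) * Nat.totient Q) := by gcongr
    refine h.trans (le_of_eq ?_)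
    rw [← hww]; field_simp
  calc _ ≤ 33 * (x / Real.log x) / Nat.totient Q := by
        have : 33 * ((x:ℝ) / Real.log x) / Nat.totient Q = 32 * (x / Real.log x) / Nat.totient Q
          + (x / Real.log x) / Nat.totient Q := by ring
        linarith
    _ ≤ _ := by
      apply div_le_div_of_nonneg_right _ hφ.le
      linarith

lemma const_le (c ε : ℝ) (hε : 0 < ε) : ∀ᶠ x : ℕ in atTop, c ≤ ε * (Nat.primeCounting x : ℝ) := by
  have h : Tendsto (fun x : ℕ => (Nat.primeCounting x : ℝ)) atTop atTop :=
    tendsto_natCast_atTop_atTop.comp Nat.tendsto_primeCounting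
  filter_upwards [h.eventually_ge_atTop (c / ε)] with x hx
  rwa [div_le_iff₀' hε] at hx

lemma class_card (P : Finset ℕ) (s : ℤ) (hP : ∀ q ∈ P, q.Prime ∧ 2 < q ∧ ¬ (q : ℤ) ∣ s) :
    ((Finset.range (∏ q ∈ P, q)).filter (fun a => ∀ q ∈ P, ¬ q ∣ a ∧ ¬ (q : ℤ) ∣ (a : ℤ) - s)).card
      ≤ ∏ q ∈ P, (q - 2) := by
  set t : ℕ → Finset ℕ := fun q => (Finset.range q).filter (fun r => ¬ q ∣ r ∧ ¬ (q : ℤ) ∣ (r : ℤ) - s)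
  have ht : ∀ q ∈ P, (t q).card ≤ q - 2 := by
    intro q hq
    obtain ⟨hp, h2, hs⟩ := hP q hq
    have hq0 : (0:ℤ) < q := by exact_mod_cast hp.pos
    set r := (s % q).toNat
    have hr : (r : ℤ) = s % q := Int.toNat_of_nonneg (Int.emod_nonneg _ hq0.ne')
    have hrlt : r < q := by
      have := Int.emod_lt_of_pos s hq0; omega
    have hr0 : r ≠ 0 := by
      intro h; apply hs; apply Int.dvd_of_emod_eq_zero; rw [← hr, h]; rfl
    have hsub : t q ⊆ (Finset.range q) \ {0, r} := by
      intro b hb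
      simp only [t, Finset.mem_filter, Finset.mem_range] at hb
      simp only [Finset.mem_sdiff, Finset.mem_range, Finset.mem_insert, Finset.mem_singleton]
      refine ⟨hb.1, ?_⟩
      rintro (rfl | rfl)
      · exact hb.2.1 (dvd_zero _)
      · apply hb.2.2
        rw [hr]
        exact (dvd_sub_comm).1 Int.dvd_self_sub_emod
    refine (Finset.card_le_card hsub).trans ?_
    rw [Finset.card_sdiff_of_subset]
    · rw [Finset.card_range, Finset.card_pair (Ne.symm hr0)]
    · intro b hb
      simp only [Finset.mem_insert, Finset.mem_singleton] at hb
      rw [Finset.mem_range]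
      rcases hb with rfl | rfl
      · exact hp.pos
      · exact hrlt
  refine le_trans ?_ (Finset.prod_le_prod' ht)
  rw [← Finset.card_pi]
  apply Finset.card_le_card_of_injOn (fun a => fun q _ => a % q)
  · intro a ha
    simp only [Finset.coe_filter, Finset.mem_range, Set.mem_ofPred_eq] at ha
    simp only [Finset.mem_coe, Finset.mem_pi]
    intro q hq
    simp only [t, Finset.mem_filter, Finset.mem_range]
    refine ⟨Nat.mod_lt _ (hP q hq).1.pos, ?_, ?_⟩
    · rw [Nat.dvd_mod_iff dvd_rfl]; exact (ha.2 q hq).1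
    · intro h
      apply (ha.2 q hq).2
      have h2 : (q:ℤ) ∣ (a:ℤ) - ((a % q : ℕ) : ℤ) := by
        push_cast; exact Int.dvd_self_sub_emod
      have := dvd_add h2 h
      simpa using this
  · intro a ha b hb hab
    simp only [Finset.coe_filter, Finset.mem_range, Set.mem_ofPred_eq] at ha hb
    have h1 : ∀ q ∈ P, (q:ℤ) ∣ (b:ℤ) - a := by
      intro q hq
      have := congrFun (congrFun hab q) hq
      exact (Nat.modEq_iff_dvd).1 this
    have h2 : (∏ q ∈ P, (q:ℤ)) ∣ (b:ℤ) - a := by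
      apply Finset.prod_dvd_of_coprime _ h1
      intro p hp q hq hne
      exact Nat.isCoprime_iff_coprime.2 ((Nat.coprime_primes (hP p hp).1 (hP q hq).1).2 hne)
    have h3 : a ≡ b [MOD ∏ q ∈ P, q] := by
      rw [Nat.modEq_iff_dvd, Nat.cast_prod]; exact h2
    exact Nat.ModEq.eq_of_lt_of_lt h3 ha.1 hb.1

lemma bad_P (P : Finset ℕ) (s : ℤ) (hP : ∀ q ∈ P, q.Prime ∧ 2 < q ∧ ¬ (q : ℤ) ∣ s)
    (ε : ℝ) (hε : 0 < ε) (hprod : ∏ q ∈ P, (1 - 1 / ((q:ℝ) - 1)) ≤ ε) :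
    ∀ᶠ x : ℕ in atTop,
      (((Finset.Ioc 0 x).filter (fun p : ℕ => p.Prime ∧ ∀ q ∈ P, ¬ (q : ℤ) ∣ (p : ℤ) - s)).card : ℝ) ≤
        67 * ε * (Nat.primeCounting x : ℝ) := by
  set Q := ∏ q ∈ P, q with hQdef
  have hQ : 0 < Q := Finset.prod_pos fun q hq => (hP q hq).1.pos
  have hφ : (0:ℝ) < Nat.totient Q := by exact_mod_cast Nat.totient_pos.2 hQ
  have hφ2 : Nat.totient Q = ∏ q ∈ P, (q - 1) := by
    have key : ∀ T : Finset ℕ, T ⊆ P → Nat.totient (∏ q ∈ T, q) = ∏ q ∈ T, (q - 1) := by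
      intro T
      induction T using Finset.induction_on with
      | empty => simp
      | insert r T hr ih =>
        intro hT
        have hrP := hP r (hT (Finset.mem_insert_self _ _))
        rw [Finset.prod_insert hr, Finset.prod_insert hr, Nat.totient_mul, 
          ih ((Finset.subset_insert _ _).trans hT), Nat.totient_prime hrP.1]
        apply Nat.Coprime.prod_right
        intro q hq
        refine (Nat.coprime_primes hrP.1 (hP q (hT (Finset.mem_insert_of_mem hq))).1).2 ?_
        rintro rfl; exact hr hq
    exact key P subset_rfl
  set B := (Finset.range Q).filter (fun a => ∀ q ∈ P, ¬ q ∣ a ∧ ¬ (q : ℤ) ∣ (a : ℤ) - s) with hB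
  have hBc : (B.card : ℝ) ≤ ε * Nat.totient Q := by
    have h1 : (B.card : ℝ) ≤ ((∏ q ∈ P, (q - 2) : ℕ) : ℝ) := by exact_mod_cast class_card P s hP
    refine h1.trans ?_
    calc ((∏ q ∈ P, (q - 2) : ℕ) : ℝ) = (∏ q ∈ P, (1 - 1 / ((q:ℝ) - 1))) * (Nat.totient Q : ℝ) := by
          rw [hφ2, Nat.cast_prod, Nat.cast_prod, ← Finset.prod_mul_distrib]
          refine Finset.prod_congr rfl fun q hq => ?_
          have h2 := (hP q hq).2.1
          have h2r : (2:ℝ) < q := by exact_mod_cast h2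
          rw [Nat.cast_sub (by omega), Nat.cast_sub (by omega)]
          have : (q:ℝ) - 1 ≠ 0 := by linarith
          push_cast
          field_simp
          ring
      _ ≤ _ := by gcongr
  filter_upwards [bt Q hQ, const_le ((Q:ℝ) + 1) ε hε] with x hx1 hx2
  have hsub : (Finset.Ioc 0 x).filter (fun p : ℕ => p.Prime ∧ ∀ q ∈ P, ¬ (q : ℤ) ∣ (p : ℤ) - s) ⊆
      Finset.range (Q + 1) ∪ B.biUnion (fun a => (Finset.Ioc 0 x).filter (fun p : ℕ => p.Prime ∧ p ≡ a [MOD Q])) := by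
    intro p hp
    simp only [Finset.mem_filter, Finset.mem_Ioc] at hp
    simp only [Finset.mem_union, Finset.mem_biUnion, Finset.mem_range, Finset.mem_filter, Finset.mem_Ioc, hB]
    by_cases h : p < Q + 1
    · left; exact h
    right
    refine ⟨p % Q, ⟨Nat.mod_lt _ hQ, fun q hq => ⟨?_, ?_⟩⟩, hp.1, hp.2.1, (Nat.mod_modEq p Q).symm⟩
    · have hqQ : q ∣ Q := Finset.dvd_prod_of_mem _ hq
      rw [Nat.dvd_mod_iff hqQ]
      intro hd
      have := (Nat.prime_dvd_prime_iff_eq (hP q hq).1 hp.2.1).1 hd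
      have := Nat.le_of_dvd hQ hqQ
      omega
    · have hqQ : q ∣ Q := Finset.dvd_prod_of_mem _ hq
      intro h
      apply hp.2.2 q hq
      have h2 : (q:ℤ) ∣ (p:ℤ) - ((p % Q : ℕ) : ℤ) := by
        refine dvd_trans (Int.natCast_dvd_natCast.2 hqQ) ?_
        push_cast; exact Int.dvd_self_sub_emod
      have := dvd_add h2 h
      simpa using this
  have hc := (Finset.card_le_card hsub).trans (Finset.card_union_le _ _)
  rw [Finset.card_range] at hc
  have hc2 : ((B.biUnion (fun a => (Finset.Ioc 0 x).filter (fun p : ℕ => p.Prime ∧ p ≡ a [MOD Q]))).card : ℝ) ≤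
      B.card * (66 * (Nat.primeCounting x : ℝ) / Nat.totient Q) := by
    have h := Finset.card_biUnion_le (s := B)
      (t := fun a => (Finset.Ioc 0 x).filter (fun p : ℕ => p.Prime ∧ p ≡ a [MOD Q]))
    calc _ ≤ ((∑ a ∈ B, ((Finset.Ioc 0 x).filter (fun p : ℕ => p.Prime ∧ p ≡ a [MOD Q])).card : ℕ) : ℝ) := by
          exact_mod_cast h
      _ ≤ _ := by
        push_cast
        rw [← nsmul_eq_mul]
        exact Finset.sum_le_card_nsmul _ _ _ fun a _ => hx1 a
  have hc3 : (B.card : ℝ) * (66 * (Nat.primeCounting x : ℝ) / Nat.totient Q) ≤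
      (ε * Nat.totient Q) * (66 * (Nat.primeCounting x : ℝ) / Nat.totient Q) := by gcongr
  have hc4 : (ε * Nat.totient Q) * (66 * (Nat.primeCounting x : ℝ) / Nat.totient Q) =
      66 * ε * Nat.primeCounting x := by field_simp
  have hc5 : (((Finset.Ioc 0 x).filter (fun p : ℕ => p.Prime ∧ ∀ q ∈ P, ¬ (q : ℤ) ∣ (p : ℤ) - s)).card : ℝ) ≤
     (Q:ℝ) + 1 + ((B.biUnion (fun a => (Finset.Ioc 0 x).filter (fun p : ℕ => p.Prime ∧ p ≡ a [MOD Q]))).card : ℝ) := by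
    exact_mod_cast hc
  linarith

lemma exists_P (N : ℕ) (hN : 2 ≤ N) (ε : ℝ) (hε : 0 < ε) : ∃ M, 
    ∏ q ∈ (Finset.range M).filter (fun q : ℕ => q.Prime ∧ N < q), (1 - 1 / ((q:ℝ) - 1)) ≤ ε := by
  have h1 : ¬ Summable (fun n : ℕ => if n.Prime ∧ N < n then 1 / (n:ℝ) else 0) := by
    intro h
    apply not_summable_one_div_on_primes
    rw [← summable_nat_add_iff (N + 1)] at h ⊢
    refine h.congr fun n => ?_
    simp only [Set.indicator]
    have : N < n + (N + 1) := by omega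
    simp [this]
  rw [not_summable_iff_tendsto_nat_atTop_of_nonneg (fun n => by split_ifs <;> positivity)] at h1
  obtain ⟨M, hM⟩ := (h1.eventually_ge_atTop (-Real.log ε)).exists
  refine ⟨M, ?_⟩
  rw [← Finset.sum_filter] at hM
  calc _ ≤ ∏ q ∈ (Finset.range M).filter (fun q : ℕ => q.Prime ∧ N < q), Real.exp (-(1 / (q:ℝ))) := by
        refine Finset.prod_le_prod ?_ ?_
        · intro q hq
          simp only [Finset.mem_filter] at hq
          have : (2:ℝ) < q := by exact_mod_cast (show 2 < q by omega)
          rw [sub_nonneg, div_le_one (by linarith)]; linarith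
        · intro q hq
          simp only [Finset.mem_filter] at hq
          have : (2:ℝ) < q := by exact_mod_cast (show 2 < q by omega)
          have h2 := Real.add_one_le_exp (-(1 / (q:ℝ)))
          have h3 : 1 / (q:ℝ) ≤ 1 / ((q:ℝ) - 1) :=
            one_div_le_one_div_of_le (by linarith) (by linarith)
          linarith
    _ = Real.exp (-∑ q ∈ (Finset.range M).filter (fun q : ℕ => q.Prime ∧ N < q), 1 / (q:ℝ)) := by
        rw [← Real.exp_sum, Finset.sum_neg_distrib]
    _ ≤ Real.exp (Real.log ε) := Real.exp_le_exp.2 (by linarith)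
    _ = ε := Real.exp_log hε

lemma bad_m (s : ℤ) (m : ℕ) : ∀ N : ℕ, 2 ≤ N → (∀ q : ℕ, N < q → ¬ (q : ℤ) ∣ s) →
    ∀ ε : ℝ, 0 < ε → ∃ M, N ≤ M ∧ ∀ᶠ x : ℕ in atTop,
      (((Finset.Ioc 0 x).filter (fun p : ℕ => p.Prime ∧
        ((Finset.Ioc N M).filter (fun q : ℕ => q.Prime ∧ (q : ℤ) ∣ (p : ℤ) - s)).card < m)).card : ℝ) ≤
        ε * (Nat.primeCounting x : ℝ) := by
  induction m with
  | zero =>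
    intro N _ _ ε hε
    refine ⟨N, le_rfl, Eventually.of_forall fun x => ?_⟩
    simp; positivity
  | succ m ih =>
    intro N hN hs ε hε
    obtain ⟨M1, hM1, h1⟩ := ih N hN hs (ε / 2) (by positivity)
    obtain ⟨M2, h2⟩ := exists_P M1 (by omega) (ε / 134) (by positivity)
    set P := (Finset.range M2).filter (fun q : ℕ => q.Prime ∧ M1 < q) with hP
    have h3 := bad_P P s (by
      intro q hq
      simp only [hP, Finset.mem_filter] at hq
      exact ⟨hq.2.1, by omega, hs q (by omega)⟩) (ε / 134) (by positivity) h2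
    refine ⟨max M1 M2, by omega, ?_⟩
    filter_upwards [h1, h3] with x hx1 hx3
    have hsub : (Finset.Ioc 0 x).filter (fun p : ℕ => p.Prime ∧
        ((Finset.Ioc N (max M1 M2)).filter (fun q : ℕ => q.Prime ∧ (q : ℤ) ∣ (p : ℤ) - s)).card < m + 1) ⊆
        (Finset.Ioc 0 x).filter (fun p : ℕ => p.Prime ∧
        ((Finset.Ioc N M1).filter (fun q : ℕ => q.Prime ∧ (q : ℤ) ∣ (p : ℤ) - s)).card < m) ∪
        (Finset.Ioc 0 x).filter (fun p : ℕ => p.Prime ∧ ∀ q ∈ P, ¬ (q : ℤ) ∣ (p : ℤ) - s) := by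
      intro p hp
      simp only [Finset.mem_filter, Finset.mem_union] at hp ⊢
      by_contra hcon
      push Not at hcon
      have ha := hcon.1 hp.1 hp.2.1
      obtain ⟨q, hq, hqd⟩ := hcon.2 hp.1 hp.2.1
      simp only [hP, Finset.mem_filter, Finset.mem_range] at hq
      have hss : insert q ((Finset.Ioc N M1).filter (fun q : ℕ => q.Prime ∧ (q : ℤ) ∣ (p : ℤ) - s)) ⊆
          (Finset.Ioc N (max M1 M2)).filter (fun q : ℕ => q.Prime ∧ (q : ℤ) ∣ (p : ℤ) - s) := by
        intro r hr
        simp only [Finset.mem_insert, Finset.mem_filter, Finset.mem_Ioc] at hr ⊢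
        rcases hr with rfl | hr
        · exact ⟨⟨by omega, by omega⟩, hq.2.1, hqd⟩
        · exact ⟨⟨hr.1.1, by omega⟩, hr.2⟩
      have hc := Finset.card_le_card hss
      rw [Finset.card_insert_of_notMem] at hc
      · have := hp.2.2; omega
      · simp only [Finset.mem_filter, Finset.mem_Ioc]; omega
    have hc := (Finset.card_le_card hsub).trans (Finset.card_union_le _ _)
    have hcr : (((Finset.Ioc 0 x).filter (fun p : ℕ => p.Prime ∧
        ((Finset.Ioc N (max M1 M2)).filter (fun q : ℕ => q.Prime ∧ (q : ℤ) ∣ (p : ℤ) - s)).card < m + 1)).card : ℝ)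
        ≤ _ := Nat.cast_le.2 hc
    rw [Nat.cast_add] at hcr
    linarith

lemma two_pow_dvd (n m : ℕ) (hn : n ≠ 0) (T : Finset ℕ)
    (hT : ∀ q ∈ T, q.Prime ∧ 2 < q ∧ q ∣ n) (hm : m ≤ T.card) : 2 ^ m ∣ Nat.totient n := by
  have h1 : ∏ q ∈ T, (q - 1) ∣ Nat.totient n := by
    rw [Nat.totient_eq_div_primeFactors_mul]
    apply Dvd.dvd.mul_left
    apply Finset.prod_dvd_prod_of_subset
    intro q hq
    rw [Nat.mem_primeFactors]
    exact ⟨(hT q hq).1, (hT q hq).2.2, hn⟩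
  refine dvd_trans ?_ h1
  refine (pow_dvd_pow 2 hm).trans ?_
  rw [← Finset.prod_const]
  apply Finset.prod_dvd_prod_of_dvd
  intro q hq
  have := ((hT q hq).1.eq_two_or_odd).resolve_left (by have := (hT q hq).2.1; omega)
  omega

theorem two_pow_divides_phi_density (ℓ m : ℕ) (hℓ : 0 < ℓ) (hm : 0 < m) :
    Tendsto (fun x : ℕ =>
      ({p : ℕ | p.Prime ∧ p ≤ x ∧ ℓ < p ∧
          2 ^ m ∣ Nat.totient (p - ℓ) ∧ 2 ^ m ∣ Nat.totient (p + ℓ)}.ncard : ℝ) /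
        (Nat.primeCounting x : ℝ)) atTop (𝓝 1) := by
  have hpi : ∀ x : ℕ, ((Finset.Ioc 0 x).filter Nat.Prime).card = Nat.primeCounting x := by
    intro x
    rw [Nat.primeCounting, Nat.primeCounting', Nat.count_eq_card_filter_range]
    congr 1
    ext p
    simp only [Finset.mem_filter, Finset.mem_Ioc, Finset.mem_range]
    constructor
    · rintro ⟨h, hp⟩; exact ⟨by omega, hp⟩
    · rintro ⟨h, hp⟩; exact ⟨⟨hp.pos, by omega⟩, hp⟩
  have hset : ∀ x : ℕ, {p : ℕ | p.Prime ∧ p ≤ x ∧ ℓ < p ∧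
          2 ^ m ∣ Nat.totient (p - ℓ) ∧ 2 ^ m ∣ Nat.totient (p + ℓ)}.ncard =
      ((Finset.Ioc 0 x).filter (fun p : ℕ => p.Prime ∧ ℓ < p ∧
          2 ^ m ∣ Nat.totient (p - ℓ) ∧ 2 ^ m ∣ Nat.totient (p + ℓ))).card := by
    intro x
    rw [← Set.ncard_coe_finset]
    congr 1
    ext p
    simp only [Set.mem_ofPred_eq, Finset.coe_filter, Finset.mem_Ioc]
    constructor
    · rintro ⟨h1, h2, h3⟩; exact ⟨⟨h1.pos, h2⟩, h1, h3⟩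
    · rintro ⟨⟨_, h2⟩, h1, h3⟩; exact ⟨h1, h2, h3⟩
  simp_rw [hset]
  set N := max 2 ℓ with hN
  have hs1 : ∀ q : ℕ, N < q → ¬ (q : ℤ) ∣ (ℓ : ℤ) := by
    intro q hq h
    have := Nat.le_of_dvd hℓ (Int.natCast_dvd_natCast.1 h)
    omega
  have hs2 : ∀ q : ℕ, N < q → ¬ (q : ℤ) ∣ -(ℓ : ℤ) := by
    intro q hq h
    exact hs1 q hq ((dvd_neg).1 h)
  have main : ∀ ε : ℝ, 0 < ε → ∀ᶠ x : ℕ in atTop, (1 - ε) * (Nat.primeCounting x : ℝ) ≤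
      (((Finset.Ioc 0 x).filter (fun p : ℕ => p.Prime ∧ ℓ < p ∧
          2 ^ m ∣ Nat.totient (p - ℓ) ∧ 2 ^ m ∣ Nat.totient (p + ℓ))).card : ℝ) := by
    intro ε hε
    obtain ⟨M1, _, h1⟩ := bad_m ℓ m N (by omega) hs1 (ε / 3) (by positivity)
    obtain ⟨M2, _, h2⟩ := bad_m (-ℓ) m N (by omega) hs2 (ε / 3) (by positivity)
    filter_upwards [h1, h2, const_le ((ℓ + 1 : ℕ) : ℝ) (ε / 3) (by positivity)] with x hx1 hx2 hx3
    set B1 := (Finset.Ioc 0 x).filter (fun p : ℕ => p.Prime ∧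
        ((Finset.Ioc N M1).filter (fun q : ℕ => q.Prime ∧ (q : ℤ) ∣ (p : ℤ) - ℓ)).card < m) with hB1
    set B2 := (Finset.Ioc 0 x).filter (fun p : ℕ => p.Prime ∧
        ((Finset.Ioc N M2).filter (fun q : ℕ => q.Prime ∧ (q : ℤ) ∣ (p : ℤ) - (-ℓ))).card < m) with hB2
    set G := (Finset.Ioc 0 x).filter (fun p : ℕ => p.Prime ∧ ℓ < p ∧
          2 ^ m ∣ Nat.totient (p - ℓ) ∧ 2 ^ m ∣ Nat.totient (p + ℓ)) with hG
    have hsub : (Finset.Ioc 0 x).filter Nat.Prime ⊆ G ∪ (B1 ∪ (B2 ∪ Finset.range (ℓ + 1))) := by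
      intro p hp
      by_contra hcon
      simp only [Finset.mem_union, not_or, Finset.mem_range, hG, hB1, hB2, Finset.mem_filter] at hcon hp
      obtain ⟨c1, c2, c3, c4⟩ := hcon
      have c2' := not_lt.1 (fun h => c2 ⟨hp.1, hp.2, h⟩)
      have c3' := not_lt.1 (fun h => c3 ⟨hp.1, hp.2, h⟩)
      apply c1
      refine ⟨hp.1, hp.2, by omega, ?_, ?_⟩
      · refine two_pow_dvd _ _ (by omega) _ ?_ c2'
        intro q hq
        simp only [Finset.mem_filter, Finset.mem_Ioc] at hq
        refine ⟨hq.2.1, by omega, ?_⟩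
        rw [← Int.natCast_dvd_natCast, Nat.cast_sub (by omega)]
        exact hq.2.2
      · refine two_pow_dvd _ _ (by omega) _ ?_ c3'
        intro q hq
        simp only [Finset.mem_filter, Finset.mem_Ioc] at hq
        refine ⟨hq.2.1, by omega, ?_⟩
        rw [← Int.natCast_dvd_natCast, Nat.cast_add]
        have := hq.2.2
        rwa [sub_neg_eq_add] at this
    have hc := Finset.card_le_card hsub
    rw [hpi] at hc
    have u1 := Finset.card_union_le G (B1 ∪ (B2 ∪ Finset.range (ℓ + 1)))
    have u2 := Finset.card_union_le B1 (B2 ∪ Finset.range (ℓ + 1))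
    have u3 := Finset.card_union_le B2 (Finset.range (ℓ + 1))
    rw [Finset.card_range] at u3
    have hcn : Nat.primeCounting x ≤ G.card + (B1.card + (B2.card + (ℓ + 1))) := by omega
    have hcr : (Nat.primeCounting x : ℝ) ≤ G.card + (B1.card + (B2.card + ((ℓ + 1 : ℕ) : ℝ))) := by
      exact_mod_cast hcn
    linarith
  rw [Metric.tendsto_atTop']
  intro ε hε
  have hh := (main (ε / 2) (by positivity)).and (const_le 1 1 one_pos)
  obtain ⟨x0, hx0⟩ := eventually_atTop.1 hh
  refine ⟨x0, fun x hx => ?_⟩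
  obtain ⟨g1, g2⟩ := hx0 x (le_of_lt hx)
  have hpos : (0:ℝ) < Nat.primeCounting x := by linarith
  have hup : (((Finset.Ioc 0 x).filter (fun p : ℕ => p.Prime ∧ ℓ < p ∧
          2 ^ m ∣ Nat.totient (p - ℓ) ∧ 2 ^ m ∣ Nat.totient (p + ℓ))).card : ℝ) ≤ Nat.primeCounting x := by
    rw [← hpi]
    apply Nat.cast_le.2
    apply Finset.card_le_card
    intro p hp
    simp only [Finset.mem_filter] at hp ⊢
    exact ⟨hp.1, hp.2.1⟩
  rw [Real.dist_eq, abs_lt]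
  constructor
  · rw [← le_div_iff₀ hpos] at g1
    linarith
  · rw [← div_le_one hpos] at hup
    linarith
end

section
/- There exists an absolute constant C > 0 with the following property. Let y ≥ exp(48^6) be a real number and let D be a positive integer with 24 | D and D | L_y, such that ω(D) ∈ [1.5·log log y, 2.5·log log y] and D/φ(D) ≤ (log y)^{1/3}. Then the number of ordered pairs (m₁, m₂) of positive integers with m₁·m₂ = D, gcd(m₁, m₂) = 2, and |φ(m₁)/m₁ − φ(m₂)/m₂| < 4/(y·√(log y)) is at most C · 2^{ω(D)} / √(log log y). -/
/-- `Ly y` is the least common multiple of all positive integers `m ≤ y`. -/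
noncomputable def Ly (y : ℝ) : ℕ := (Finset.Icc 1 ⌊y⌋₊).lcm id

lemma centralBinom_sq_bound (m : ℕ) : (Nat.centralBinom m) ^ 2 * (2 * m + 1) ≤ 16 ^ m := by
  induction m with
  | zero => simp
  | succ m ih =>
    have h := Nat.succ_mul_centralBinom_succ m
    have h2 : (m + 1) ^ 2 * ((Nat.centralBinom (m + 1)) ^ 2 * (2 * (m + 1) + 1))
        ≤ (m + 1) ^ 2 * 16 ^ (m + 1) := by
      calc (m + 1) ^ 2 * ((Nat.centralBinom (m + 1)) ^ 2 * (2 * (m + 1) + 1))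
          = ((m + 1) * Nat.centralBinom (m + 1)) ^ 2 * (2 * m + 3) := by ring
        _ = ((Nat.centralBinom m) ^ 2 * (2 * m + 1)) * (4 * ((2 * m + 1) * (2 * m + 3))) := by
            rw [h]; ring
        _ ≤ 16 ^ m * (4 * ((2 * m + 1) * (2 * m + 3))) := Nat.mul_le_mul_right _ ih
        _ ≤ 16 ^ m * (16 * (m + 1) ^ 2) := Nat.mul_le_mul_left _ (by nlinarith)
        _ = (m + 1) ^ 2 * 16 ^ (m + 1) := by ring
    exact Nat.le_of_mul_le_mul_left h2 (by positivity)

lemma choose_mid_sq (n : ℕ) : (n.choose (n / 2)) ^ 2 * n ≤ 4 ^ n := by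
  rcases Nat.even_or_odd' n with ⟨m, rfl | rfl⟩
  · have h := centralBinom_sq_bound m
    rw [Nat.centralBinom_eq_two_mul_choose] at h
    rw [Nat.mul_div_cancel_left m two_pos, pow_mul]
    norm_num
    nlinarith [sq_nonneg ((2 * m).choose m)]
  · have h := centralBinom_sq_bound (m + 1)
    have e : Nat.centralBinom (m + 1) = 2 * (2 * m + 1).choose m := by
      rw [Nat.centralBinom_eq_two_mul_choose, show 2 * (m + 1) = (2 * m + 1) + 1 by ring,
        Nat.choose_succ_succ', ← Nat.choose_symm_half m]
      ring
    rw [e] at h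
    have e2 : (2 * m + 1) / 2 = m := by omega
    rw [e2]
    have e3 : (4 : ℕ) ^ (2 * m + 1) = 4 * 16 ^ m := by
      rw [pow_succ, pow_mul]; norm_num; ring
    rw [e3]
    rw [pow_succ 16 m] at h
    nlinarith [sq_nonneg ((2 * m + 1).choose m), h]

lemma choose_mid_le (n : ℕ) (x : ℝ) (hx : 0 < x) (hxn : x ≤ n) :
    (n.choose (n / 2) : ℝ) ≤ 2 ^ n / Real.sqrt x := by
  rw [le_div_iff₀ (Real.sqrt_pos.2 hx)]
  apply le_of_sq_le_sq _ (by positivity)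
  rw [mul_pow, Real.sq_sqrt hx.le]
  have h : ((n.choose (n / 2) : ℝ)) ^ 2 * n ≤ 4 ^ n := by exact_mod_cast choose_mid_sq n
  have e : ((2 : ℝ) ^ n) ^ 2 = 4 ^ n := by rw [← pow_mul, mul_comm, pow_mul]; norm_num
  rw [e]
  exact le_trans (by gcongr) h

lemma totient_div_eq (m : ℕ) (hm : 0 < m) :
    (Nat.totient m : ℝ) / m = ∏ p ∈ m.primeFactors, (1 - (p : ℝ)⁻¹) := by
  have h := Nat.totient_eq_mul_prod_factors m
  have h' : (Nat.totient m : ℝ) = m * ∏ p ∈ m.primeFactors, (1 - (p : ℝ)⁻¹) := by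
    have h2 := congrArg (Rat.cast : ℚ → ℝ) h
    push_cast at h2
    exact h2
  rw [h']
  field_simp

lemma factor_pos {p : ℕ} (hp : p.Prime) : 0 < 1 - (p : ℝ)⁻¹ := by
  have : (1 : ℝ) < p := by exact_mod_cast hp.one_lt
  linarith [inv_lt_one_of_one_lt₀ this]

lemma factor_le (p : ℕ) : 1 - (p : ℝ)⁻¹ ≤ 1 := by
  have : (0 : ℝ) ≤ (p : ℝ)⁻¹ := by positivity
  linarith

lemma prod_anti {A B : Finset ℕ} (hB : ∀ p ∈ B, p.Prime) (h : A ⊆ B) :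
    ∏ p ∈ B, (1 - (p : ℝ)⁻¹) ≤ ∏ p ∈ A, (1 - (p : ℝ)⁻¹) := by
  rw [← Finset.prod_sdiff h]
  have h1 : ∏ p ∈ B \ A, (1 - (p : ℝ)⁻¹) ≤ 1 :=
    Finset.prod_le_one (fun p hp => (factor_pos (hB p (Finset.mem_sdiff.1 hp).1)).le)
      (fun p _ => factor_le p)
  have h2 : 0 ≤ ∏ p ∈ A, (1 - (p : ℝ)⁻¹) :=
    Finset.prod_nonneg (fun p hp => (factor_pos (hB p (h hp))).le)
  nlinarith

lemma prime_le_of_dvd_Ly {y : ℝ} (hy : 0 ≤ y) {q : ℕ} (hq : q.Prime) (h : q ∣ Ly y) :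
    (q : ℝ) ≤ y := by
  have h1 : Ly y ∣ (⌊y⌋₊).factorial := by
    apply Finset.lcm_dvd
    intro b hb
    rw [Finset.mem_Icc] at hb
    exact Nat.dvd_factorial hb.1 hb.2
  have h2 := (hq.dvd_factorial).1 (h.trans h1)
  exact (Nat.cast_le.2 h2).trans (Nat.floor_le hy)

lemma val_facts {a b D : ℕ} (ha : 0 < a) (hb : 0 < b) (h : a * b = D) (hg : Nat.gcd a b = 2)
    (p : ℕ) : a.factorization p + b.factorization p = D.factorization p ∧
      min (a.factorization p) (b.factorization p) = if p = 2 then 1 else 0 := by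
  constructor
  · rw [← h, Nat.factorization_mul ha.ne' hb.ne']; rfl
  · have := congrArg (fun n => n.factorization p) hg
    simp only [Nat.factorization_gcd ha.ne' hb.ne', Nat.prime_two.factorization] at this
    rw [Finsupp.single_apply] at this
    simp only [eq_comm (a := 2)] at this
    exact this

lemma pair_inj {D a b c d : ℕ} (ha : 0 < a) (hb : 0 < b) (h : a * b = D)
    (hg : Nat.gcd a b = 2) (hc : 0 < c) (hd : 0 < d) (h' : c * d = D) (hg' : Nat.gcd c d = 2)
    (hp : ∀ p : ℕ, p.Prime → p ∣ D → (p ∣ a ↔ p ∣ c)) (h4 : 4 ∣ a ↔ 4 ∣ c) : a = c := by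
  apply Nat.eq_of_factorization_eq ha.ne' hc.ne'
  intro p
  by_cases pp : p.Prime
  swap
  · simp [Nat.factorization_eq_zero_of_not_prime, pp]
  obtain ⟨s1, m1⟩ := val_facts ha hb h hg p
  obtain ⟨s2, m2⟩ := val_facts hc hd h' hg' p
  by_cases hp2 : p = 2
  · subst hp2
    rw [show 4 = 2 ^ 2 by norm_num, Nat.prime_two.pow_dvd_iff_le_factorization ha.ne',
      Nat.prime_two.pow_dvd_iff_le_factorization hc.ne'] at h4
    simp only [if_true] at m1 m2
    omega
  · simp only [hp2, if_false] at m1 m2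
    have e : p ∣ a ↔ p ∣ c := by
      by_cases hD : p ∣ D
      · exact hp p pp hD
      · exact ⟨fun k => absurd (k.trans (h ▸ Dvd.intro b rfl)) hD,
          fun k => absurd (k.trans (h' ▸ Dvd.intro d rfl)) hD⟩
    rw [pp.dvd_iff_one_le_factorization ha.ne', pp.dvd_iff_one_le_factorization hc.ne'] at e
    omega

lemma no_chain {D a b c d : ℕ} {y t : ℝ} (hy : 0 < y) (ht : 48 ≤ t)
    (hD : D ∣ Ly y) (hφ : (D : ℝ) / (Nat.totient D : ℝ) ≤ t ^ 2)
    (ha : 0 < a) (hb : 0 < b) (h : a * b = D)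
    (hc : 0 < c) (hd : 0 < d) (h' : c * d = D) (hg : Nat.gcd a b = 2)
    (hg' : Nat.gcd c d = 2)
    (hab : |(Nat.totient a : ℝ) / (a : ℝ) - (Nat.totient b : ℝ) / (b : ℝ)| < 4 / (y * t ^ 3))
    (hcd : |(Nat.totient c : ℝ) / (c : ℝ) - (Nat.totient d : ℝ) / (d : ℝ)| < 4 / (y * t ^ 3))
    (hp : ∀ p : ℕ, p.Prime → p ∣ D → p ∣ a → p ∣ c) {q : ℕ} (hq : q.Prime)
    (hqc : q ∣ c) (hqa : ¬ q ∣ a) : False := by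
  have hD0 : 0 < D := h ▸ Nat.mul_pos ha hb
  have haD : a ∣ D := h ▸ Dvd.intro b rfl
  have hcD : c ∣ D := h' ▸ Dvd.intro d rfl
  have hdD : d ∣ D := h' ▸ Dvd.intro_left c rfl
  have hqy := prime_le_of_dvd_Ly hy.le hq ((hqc.trans hcD).trans hD)
  rw [totient_div_eq a ha, totient_div_eq b hb] at hab
  rw [totient_div_eq c hc, totient_div_eq d hd] at hcd
  have hDF := totient_div_eq D hD0
  have I1 : ∏ p ∈ D.primeFactors, (1 - (p : ℝ)⁻¹) ≤ ∏ p ∈ a.primeFactors, (1 - (p : ℝ)⁻¹) :=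
    prod_anti (fun p hp => Nat.prime_of_mem_primeFactors hp) (Nat.primeFactors_mono haD hD0.ne')
  have I2 : ∏ p ∈ b.primeFactors, (1 - (p : ℝ)⁻¹) ≤ ∏ p ∈ d.primeFactors, (1 - (p : ℝ)⁻¹) := by
    apply prod_anti (fun p hp => Nat.prime_of_mem_primeFactors hp)
    intro p hpd
    rw [Nat.mem_primeFactors] at hpd ⊢
    obtain ⟨pp, pd, -⟩ := hpd
    refine ⟨pp, ?_, hb.ne'⟩
    by_cases hp2 : p = 2
    · rw [hp2, ← hg]; exact Nat.gcd_dvd_right a b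
    have hpD : p ∣ D := pd.trans hdD
    have : ¬ p ∣ a := fun hpa => by
      have h2 := Nat.dvd_gcd (hp p pp hpD hpa) pd
      rw [hg'] at h2
      exact hp2 ((Nat.prime_dvd_prime_iff_eq pp Nat.prime_two).1 h2)
    rw [← h] at hpD
    exact (pp.dvd_mul.1 hpD).resolve_left this
  have hqA : q ∉ a.primeFactors := fun k => hqa (Nat.dvd_of_mem_primeFactors k)
  have I3 : ∏ p ∈ c.primeFactors, (1 - (p : ℝ)⁻¹) ≤
      (1 - (q : ℝ)⁻¹) * ∏ p ∈ a.primeFactors, (1 - (p : ℝ)⁻¹) := by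
    rw [← Finset.prod_insert (f := fun p : ℕ => 1 - (p : ℝ)⁻¹) hqA]
    apply prod_anti (fun p hp => Nat.prime_of_mem_primeFactors hp)
    intro p hpi
    rw [Finset.mem_insert, Nat.mem_primeFactors] at hpi
    rw [Nat.mem_primeFactors]
    rcases hpi with rfl | ⟨pp, pa, -⟩
    · exact ⟨hq, hqc, hc.ne'⟩
    · exact ⟨pp, hp p pp (pa.trans haD) pa, hc.ne'⟩
  have hDpos : (0 : ℝ) < D := by exact_mod_cast hD0
  have hφpos : (0 : ℝ) < Nat.totient D := by exact_mod_cast Nat.totient_pos.2 hD0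
  have I4 : 1 / t ^ 2 ≤ ∏ p ∈ D.primeFactors, (1 - (p : ℝ)⁻¹) := by
    rw [← hDF, ← one_div_div (D : ℝ)]
    exact one_div_le_one_div_of_le (by positivity) hφ
  set Fa := ∏ p ∈ a.primeFactors, (1 - (p : ℝ)⁻¹)
  set Fb := ∏ p ∈ b.primeFactors, (1 - (p : ℝ)⁻¹)
  set Fc := ∏ p ∈ c.primeFactors, (1 - (p : ℝ)⁻¹)
  set Fd := ∏ p ∈ d.primeFactors, (1 - (p : ℝ)⁻¹)
  rw [abs_lt] at hab hcd
  have hq0 : (0 : ℝ) < q := by exact_mod_cast hq.pos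
  have ht0 : 0 < t := by linarith
  have J1 : (1 / y) * (1 / t ^ 2) ≤ (q : ℝ)⁻¹ * Fa := by
    rw [← one_div (q : ℝ)]
    exact mul_le_mul (one_div_le_one_div_of_le hq0 hqy) (I4.trans I1) (by positivity)
      (by positivity)
  have J2 : (1 / y) * (1 / t ^ 2) < 8 / (y * t ^ 3) := by
    have : 8 / (y * t ^ 3) = 4 / (y * t ^ 3) + 4 / (y * t ^ 3) := by ring
    rw [this]
    linarith [hab.2, hcd.1]
  have J3 : (1 / y) * (1 / t ^ 2) = t / (y * t ^ 3) := by field_simp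
  rw [J3, div_lt_div_iff_of_pos_right (by positivity)] at J2
  linarith

lemma count_bound {D : ℕ} {y t : ℝ} (hy : 0 < y) (ht : 48 ≤ t)
    (hD : D ∣ Ly y) (hD0 : 0 < D) (hφ : (D : ℝ) / (Nat.totient D : ℝ) ≤ t ^ 2) :
    {mm : ℕ × ℕ | 0 < mm.1 ∧ 0 < mm.2 ∧ mm.1 * mm.2 = D ∧
            Nat.gcd mm.1 mm.2 = 2 ∧
            |(Nat.totient mm.1 : ℝ) / (mm.1 : ℝ) - (Nat.totient mm.2 : ℝ) / (mm.2 : ℝ)| <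
              4 / (y * t ^ 3)}.ncard ≤
      2 * D.primeFactors.card.choose (D.primeFactors.card / 2) := by
  classical
  set S := {mm : ℕ × ℕ | 0 < mm.1 ∧ 0 < mm.2 ∧ mm.1 * mm.2 = D ∧
            Nat.gcd mm.1 mm.2 = 2 ∧
            |(Nat.totient mm.1 : ℝ) / (mm.1 : ℝ) - (Nat.totient mm.2 : ℝ) / (mm.2 : ℝ)| <
              4 / (y * t ^ 3)} with hS
  let f : ℕ × ℕ → Finset {p // p ∈ D.primeFactors} :=
    fun mm => Finset.univ.filter (fun p => p.1 ∣ mm.1)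
  let T : Finset (Finset {p // p ∈ D.primeFactors}) := Finset.univ.filter (fun A => A ∈ f '' S)
  have hT : T.card ≤ D.primeFactors.card.choose (D.primeFactors.card / 2) := by
    have hanti : IsAntichain (· ⊆ ·) (T : Set (Finset {p // p ∈ D.primeFactors})) := by
      intro A hA B hB hne hsub
      simp only [T, Finset.coe_filter, Finset.mem_univ, true_and, Set.mem_ofPred_eq] at hA hB
      obtain ⟨⟨a, b⟩, ⟨ha, hb, h, hg, hab⟩, rfl⟩ := hA
      obtain ⟨⟨c, d⟩, ⟨hc, hd, h', hg', hcd⟩, rfl⟩ := hB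
      have hss := Finset.ssubset_iff_subset_ne.2 ⟨hsub, hne⟩
      obtain ⟨q, hqB, hqA⟩ := Finset.exists_of_ssubset hss
      simp only [f, Finset.mem_filter, Finset.mem_univ, true_and] at hqB hqA
      refine no_chain hy ht hD hφ ha hb h hc hd h' hg hg' hab hcd ?_
        (Nat.prime_of_mem_primeFactors q.2) hqB hqA
      intro p pp pD pa
      have := @hsub ⟨p, Nat.mem_primeFactors.2 ⟨pp, pD, hD0.ne'⟩⟩ (by simpa [f] using pa)
      simpa [f] using this
    have := hanti.sperner
    simpa using this
  let g : ℕ × ℕ → Finset {p // p ∈ D.primeFactors} × Bool :=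
    fun mm => (f mm, decide (4 ∣ mm.1))
  have hcard : S.ncard ≤ (SetLike.coe (T ×ˢ (Finset.univ : Finset Bool))).ncard := by
    apply Set.ncard_le_ncard_of_injOn g
    · intro mm hmm
      simp only [Finset.coe_product, Set.mem_prod, Finset.mem_coe, Finset.mem_univ, and_true,
        T, Finset.mem_filter, true_and]
      exact ⟨mm, hmm, rfl⟩
    · rintro ⟨a, b⟩ ⟨ha, hb, h, hg, -⟩ ⟨c, d⟩ ⟨hc, hd, h', hg', -⟩ heq
      simp only [g, Prod.mk.injEq, decide_eq_decide] at heq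
      obtain ⟨hf, h4⟩ := heq
      simp only at ha hb h hg hc hd h' hg'
      have hac : a = c := by
        refine pair_inj ha hb h hg hc hd h' hg' ?_ h4
        intro p pp pD
        have := Finset.ext_iff.1 hf ⟨p, Nat.mem_primeFactors.2 ⟨pp, pD, hD0.ne'⟩⟩
        simpa [f] using this
      subst hac
      have : b = d := Nat.eq_of_mul_eq_mul_left ha (h.trans h'.symm)
      rw [this]
  rw [Set.ncard_coe_finset, Finset.card_product] at hcard
  simp only [Finset.card_univ, Fintype.card_bool] at hcard
  omega

theorem count_weird_pairs :
    ∃ C : ℝ, 0 < C ∧ ∀ y : ℝ, Real.exp ((48 : ℝ) ^ 6) ≤ y →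
      ∀ D : ℕ, 0 < D → 24 ∣ D → D ∣ Ly y →
        (D.primeFactors.card : ℝ) ∈
          Set.Icc (1.5 * Real.log (Real.log y)) (2.5 * Real.log (Real.log y)) →
        (D : ℝ) / (Nat.totient D : ℝ) ≤ (Real.log y) ^ ((1 : ℝ) / 3) →
        ({mm : ℕ × ℕ | 0 < mm.1 ∧ 0 < mm.2 ∧ mm.1 * mm.2 = D ∧
            Nat.gcd mm.1 mm.2 = 2 ∧
            |(Nat.totient mm.1 : ℝ) / (mm.1 : ℝ) - (Nat.totient mm.2 : ℝ) / (mm.2 : ℝ)| <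
              4 / (y * Real.sqrt (Real.log y))}.ncard : ℝ) ≤
          C * 2 ^ D.primeFactors.card / Real.sqrt (Real.log (Real.log y)) := by
  refine ⟨2, two_pos, ?_⟩
  intro y hy D hD0 _ hD hω hφ
  have hy0 : 0 < y := (Real.exp_pos _).trans_le hy
  have hl : (48 : ℝ) ^ 6 ≤ Real.log y := (Real.le_log_iff_exp_le hy0).2 hy
  have hl0 : 0 < Real.log y := lt_of_lt_of_le (by norm_num) hl
  obtain ⟨t, ht, hlt⟩ : ∃ t : ℝ, 48 ≤ t ∧ Real.log y = t ^ 6 := by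
    refine ⟨(Real.log y) ^ ((1 : ℝ) / 6), ?_, ?_⟩
    · have := Real.rpow_le_rpow (by positivity) hl (show (0 : ℝ) ≤ 1 / 6 by norm_num)
      rw [← Real.rpow_natCast, ← Real.rpow_mul (by norm_num)] at this
      norm_num at this ⊢
      exact this
    · rw [← Real.rpow_natCast, ← Real.rpow_mul hl0.le]
      norm_num
  have ht0 : 0 < t := by linarith
  have hsq : Real.sqrt (Real.log y) = t ^ 3 := by
    rw [hlt, show t ^ 6 = (t ^ 3) ^ 2 by ring, Real.sqrt_sq (by positivity)]
  have hcb : (Real.log y) ^ ((1 : ℝ) / 3) = t ^ 2 := by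
    rw [hlt, show t ^ 6 = (t ^ 2) ^ 3 by ring, ← Real.rpow_natCast (t ^ 2) 3,
      ← Real.rpow_mul (by positivity)]
    norm_num
  have hll : 0 < Real.log (Real.log y) := Real.log_pos (lt_of_lt_of_le (by norm_num) hl)
  rw [hcb] at hφ
  rw [hsq]
  have h1 := count_bound hy0 ht hD hD0 hφ
  have h2 := choose_mid_le D.primeFactors.card _ hll (by linarith [hω.1])
  rw [mul_div_assoc]
  refine le_trans (Nat.cast_le.2 h1) ?_
  push_cast
  linarith
end
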